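/- Let (t_i) be the unit vector basis of Tsirelson's space T, let m_i ↑ ∞ in ℕ and ε_i ↓ 0 be positive reals, and let (e_i) be a normalized block basis of (t_i) such that each e_i is a (1+ε_i)-ℓ₁^{m_i} average: e_i = (Σ_{j=1}^{m_i} ω_j)/‖Σ_{j=1}^{m_i} ω_j‖_T where ω_1 < ⋯ < ω_{m_i} are normalized finitely supported vectors (with supports contained in the support of e_i) which are (1+ε_i)-equivalent to the unit vector basis of ℓ₁^{m_i}, i.e. (1+ε_i)^{−1}·Σ_j |b_j| ≤ ‖Σ_j b_j ω_j‖_T ≤ Σ_j |b_j| for all scalars b_1,…,b_{m_i}. If (e_i) has a spreading model (s_i), then for every k and all scalars a_1,…,a_k: ‖Σ_{i=1}^k a_i s_i‖ = max_{1≤i≤k} ( |a_i| + (1/2)·Σ_{j=i+1}^k |a_j| ). -/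

import Mathlib

/-!
Write `u j = e (κ j)` for a subsequence `κ` that starts late and grows fast. By the definition of a
spreading model (`spreading_approx`), `‖∑ a_j s_j‖` is the limit of `‖∑ a_j u_j‖_T` along such
subsequences, so it suffices to estimate the latter from both sides up to a small error. The basic
fact about averages (`average_sum_restr_le`) is that `n` successive sets `E_t` and an
`ℓ₁^M`-average `u` satisfy `∑_t ‖E_t u‖ ≤ (1 + ε)(1 + n / M)`: `n` successive sets and `M`
successive vectors have at most `M + n` incidences.

Upper bound (`upper_estimate`): let an admissible family `n ≤ E_1 < ⋯ < E_n` be given and let `u_i`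
be the first block it meets. Then `n` is at most the maximum of the support of `u_i`, which is tiny
compared with the lengths of the later averages. Hence each later block contributes
essentially at most `|a_j| / 2` to `(1/2) ∑_t ‖E_t x‖`, while `u_i` contributes at most
`|a_i| ‖u_i‖ = |a_i|`.

Lower bound (`lower_estimate`): the norm of `u_i` is almost attained by an admissible family, since
its coordinates are small. By the fact on averages, that family must have at least
about a fifth as many members as the length of `u_i`. Dropping the `k` members with least
contribution (`exists_discard`) therefore costs little, and it makes room to add the supports of the
later blocks, each of which contributes `|a_j| / 2`.
-/

noncomputable section

/-- sup norm of a finitely supported sequence -/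
def supNorm (x : ℕ →₀ ℝ) : ℝ := ⨆ i, |x i|

/-- coordinate restriction of `x` to the finite set `E` -/
def restr (E : Finset ℕ) (x : ℕ →₀ ℝ) : ℕ →₀ ℝ := x.filter (· ∈ E)

/-- an admissible family of `m` successive finite sets whose elements are `≥ n`. -/
def AdmissibleOn (n m : ℕ) (E : Fin m → Finset ℕ) : Prop :=
  (∀ i j : Fin m, i < j → ∀ a ∈ E i, ∀ b ∈ E j, a < b) ∧
  (∀ i : Fin m, ∀ a ∈ E i, n ≤ a)

/-- `n ≤ E 0 < ⋯ < E (n-1)` -/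
def Admissible (n : ℕ) (E : Fin n → Finset ℕ) : Prop := AdmissibleOn n n E

/-- the iteration defining the Tsirelson norm. -/
def tsAux : ℕ → (ℕ →₀ ℝ) → ℝ
  | 0, x => supNorm x
  | k + 1, x => max (supNorm x)
      (sSup {r : ℝ | ∃ (n : ℕ) (E : Fin n → Finset ℕ), 0 < n ∧ Admissible n E ∧
        r = (1 / 2) * ∑ i, tsAux k (restr (E i) x)})

/-- the Tsirelson norm `‖x‖_T = lim_k ‖x‖_k` on finitely supported sequences -/
def tsirelsonNorm (x : ℕ →₀ ℝ) : ℝ := ⨆ k, tsAux k x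

/-- A basic sequence. -/
def IsBasicSeq {S : Type*} [NormedAddCommGroup S] [NormedSpace ℝ S] (s : ℕ → S) : Prop :=
  ∃ C : ℝ, ∀ m n : ℕ, m ≤ n → ∀ a : ℕ → ℝ,
    ‖∑ i ∈ Finset.range m, a i • s i‖ ≤ C * ‖∑ i ∈ Finset.range n, a i • s i‖

/-- `s` is a spreading model of the sequence `x` of finitely supported sequences,
with respect to the norm (function) `N`. -/
def IsSpreadingModelWith (N : (ℕ →₀ ℝ) → ℝ)
    {S : Type*} [NormedAddCommGroup S] [NormedSpace ℝ S]
    (x : ℕ → (ℕ →₀ ℝ)) (s : ℕ → S) : Prop :=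
  IsBasicSeq s ∧
  ∃ ε : ℕ → ℝ, (∀ n, 0 < ε n) ∧ Antitone ε ∧ Filter.Tendsto ε Filter.atTop (nhds 0) ∧
    ∀ (n : ℕ) (a : Fin n → ℝ), (∀ i, |a i| ≤ 1) →
      ∀ k : Fin n → ℕ, StrictMono k → (∀ i, n ≤ k i) →
        |N (∑ i, a i • x (k i)) - ‖∑ i, a i • s i‖| < ε n

/-- a block sequence of the unit vector basis of `c₀₀`. -/
def IsBlockSeq (x : ℕ → (ℕ →₀ ℝ)) : Prop :=
  (∀ n, x n ≠ 0) ∧ ∀ n, ∀ p ∈ (x n).support, ∀ q ∈ (x (n + 1)).support, p < q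

/-! ### Basic properties of the Tsirelson norm -/

lemma abs_le_sum_support (x : ℕ →₀ ℝ) (p : ℕ) : |x p| ≤ ∑ i ∈ x.support, |x i| := by
  by_cases hp : p ∈ x.support
  · exact Finset.single_le_sum (f := fun i => |x i|) (fun i _ => abs_nonneg _) hp
  · rw [Finsupp.notMem_support_iff.mp hp, abs_zero]
    exact Finset.sum_nonneg fun i _ => abs_nonneg _

lemma abs_le_supNorm (x : ℕ →₀ ℝ) (p : ℕ) : |x p| ≤ supNorm x :=
  le_ciSup (f := fun i => |x i|)
    ⟨∑ i ∈ x.support, |x i|, by rintro _ ⟨p, rfl⟩; exact abs_le_sum_support x p⟩ p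

lemma supNorm_le {x : ℕ →₀ ℝ} {c : ℝ} (h : ∀ p, |x p| ≤ c) : supNorm x ≤ c := ciSup_le h

lemma supNorm_nonneg (x : ℕ →₀ ℝ) : 0 ≤ supNorm x := (abs_nonneg _).trans (abs_le_supNorm x 0)

lemma restr_apply (E : Finset ℕ) (x : ℕ →₀ ℝ) (p : ℕ) :
    restr E x p = if p ∈ E then x p else 0 := by
  simp [restr, Finsupp.filter_apply]

lemma restr_add (E : Finset ℕ) (x y : ℕ →₀ ℝ) : restr E (x + y) = restr E x + restr E y := by
  ext p; simp only [restr_apply, Finsupp.add_apply]; split_ifs <;> simp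

lemma restr_smul (E : Finset ℕ) (c : ℝ) (x : ℕ →₀ ℝ) : restr E (c • x) = c • restr E x := by
  ext p; simp only [restr_apply, Finsupp.smul_apply]; split_ifs <;> simp

lemma restr_comm (E F : Finset ℕ) (x : ℕ →₀ ℝ) :
    restr E (restr F x) = restr F (restr E x) := by
  ext p; simp only [restr_apply]; split_ifs <;> rfl

lemma restr_sum {ι : Type*} (E : Finset ℕ) (s : Finset ι) (x : ι → ℕ →₀ ℝ) :
    restr E (∑ i ∈ s, x i) = ∑ i ∈ s, restr E (x i) := by
  classical
  induction s using Finset.induction_on with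
  | empty => ext p; simp [restr_apply]
  | insert a s ha ih => rw [Finset.sum_insert ha, Finset.sum_insert ha, restr_add, ih]

lemma sum_restr_l1_le {n : ℕ} {E : Fin n → Finset ℕ} (hE : Admissible n E) (x : ℕ →₀ ℝ) :
    ∑ l, ∑ p ∈ (restr (E l) x).support, |restr (E l) x p| ≤ ∑ p ∈ x.support, |x p| := by
  have h1 : ∀ l, ∑ p ∈ (restr (E l) x).support, |restr (E l) x p|
      = ∑ p ∈ x.support, if p ∈ E l then |x p| else 0 := by
    intro l
    have hsub : (restr (E l) x).support ⊆ x.support := by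
      intro p hp
      rw [Finsupp.mem_support_iff, restr_apply] at hp
      rw [Finsupp.mem_support_iff]
      intro h0; simp [h0] at hp
    rw [Finset.sum_subset hsub]
    · refine Finset.sum_congr rfl fun p _ => ?_
      rw [restr_apply]; split_ifs <;> simp
    · intro p _ hp
      rw [Finsupp.notMem_support_iff.mp hp, abs_zero]
  simp_rw [h1]
  rw [Finset.sum_comm]
  refine Finset.sum_le_sum fun p _ => ?_
  rw [← Finset.sum_filter, Finset.sum_const, nsmul_eq_mul]
  have hc : (Finset.univ.filter fun l => p ∈ E l).card ≤ 1 := by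
    rw [Finset.card_le_one]
    intro a ha b hb
    simp only [Finset.mem_filter, Finset.mem_univ, true_and] at ha hb
    rcases lt_trichotomy a b with h | h | h
    · exact absurd (hE.1 a b h p ha p hb) (lt_irrefl _)
    · exact h
    · exact absurd (hE.1 b a h p hb p ha) (lt_irrefl _)
  have : ((Finset.univ.filter fun l => p ∈ E l).card : ℝ) ≤ 1 := by exact_mod_cast hc
  nlinarith [abs_nonneg (x p)]

lemma tsAux_succ_le {k : ℕ} {x : ℕ →₀ ℝ} {c : ℝ} (h0 : supNorm x ≤ c)
    (h : ∀ n (E : Fin n → Finset ℕ), Admissible n E →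
      (1 / 2) * ∑ i, tsAux k (restr (E i) x) ≤ c) : tsAux (k + 1) x ≤ c := by
  rw [tsAux]
  refine max_le h0 (Real.sSup_le ?_ ((supNorm_nonneg x).trans h0))
  rintro _ ⟨n, E, _, hE, rfl⟩
  exact h n E hE

lemma supNorm_le_tsAux (k : ℕ) (x : ℕ →₀ ℝ) : supNorm x ≤ tsAux k x := by
  cases k with
  | zero => rw [tsAux]
  | succ k => rw [tsAux]; exact le_max_left _ _

lemma tsAux_nonneg (k : ℕ) (x : ℕ →₀ ℝ) : 0 ≤ tsAux k x :=
  (supNorm_nonneg x).trans (supNorm_le_tsAux k x)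

lemma tsAux_le_l1 (k : ℕ) : ∀ x : ℕ →₀ ℝ, tsAux k x ≤ ∑ p ∈ x.support, |x p| := by
  induction k with
  | zero => intro x; rw [tsAux]; exact supNorm_le (abs_le_sum_support x)
  | succ k ih =>
    intro x
    refine tsAux_succ_le (supNorm_le (abs_le_sum_support x)) fun n E hE => ?_
    have h1 := Finset.sum_le_sum fun i (_ : i ∈ Finset.univ) => ih (restr (E i) x)
    have h2 := sum_restr_l1_le hE x
    have h3 : 0 ≤ ∑ i, tsAux k (restr (E i) x) := Finset.sum_nonneg fun i _ => tsAux_nonneg _ _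
    linarith

lemma term_le_tsAux_succ {k n : ℕ} {E : Fin n → Finset ℕ} (hn : 0 < n) (hE : Admissible n E)
    (x : ℕ →₀ ℝ) : (1 / 2) * ∑ i, tsAux k (restr (E i) x) ≤ tsAux (k + 1) x := by
  rw [tsAux]
  refine le_max_of_le_right (le_csSup ?_ ⟨n, E, hn, hE, rfl⟩)
  refine ⟨∑ p ∈ x.support, |x p|, ?_⟩
  rintro _ ⟨n, E, _, hE, rfl⟩
  have h1 := Finset.sum_le_sum fun i (_ : i ∈ Finset.univ) => tsAux_le_l1 k (restr (E i) x)
  have h2 := sum_restr_l1_le hE x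
  have h3 : 0 ≤ ∑ i, tsAux k (restr (E i) x) := Finset.sum_nonneg fun i _ => tsAux_nonneg _ _
  linarith

/-- To bound one level of the iteration for `x` it suffices to bound the averaged sums over
nonempty admissible families; the empty family contributes `0`. -/
lemma tsAux_succ_le' {k : ℕ} {x : ℕ →₀ ℝ} {c : ℝ} (h0 : supNorm x ≤ c)
    (h : ∀ n (E : Fin n → Finset ℕ), 0 < n → Admissible n E →
      (1 / 2) * ∑ i, tsAux k (restr (E i) x) ≤ c) : tsAux (k + 1) x ≤ c := by
  refine tsAux_succ_le h0 fun n E hE => ?_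
  rcases Nat.eq_zero_or_pos n with rfl | hn
  · simpa using (supNorm_nonneg x).trans h0
  · exact h n E hn hE

lemma tsAux_le_succ (k : ℕ) : ∀ x : ℕ →₀ ℝ, tsAux k x ≤ tsAux (k + 1) x := by
  induction k with
  | zero => intro x; exact supNorm_le_tsAux 1 x
  | succ k ih =>
    intro x
    refine tsAux_succ_le' (supNorm_le_tsAux _ x) fun n E hn hE => ?_
    refine le_trans ?_ (term_le_tsAux_succ hn hE x)
    have h1 := Finset.sum_le_sum fun i (_ : i ∈ Finset.univ) => ih (restr (E i) x)
    linarith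

lemma tsAux_add_le (k : ℕ) : ∀ x y : ℕ →₀ ℝ, tsAux k (x + y) ≤ tsAux k x + tsAux k y := by
  have hs : ∀ x y : ℕ →₀ ℝ, supNorm (x + y) ≤ supNorm x + supNorm y := fun x y =>
    supNorm_le fun p => (abs_add_le _ _).trans
      (add_le_add (abs_le_supNorm x p) (abs_le_supNorm y p))
  induction k with
  | zero => intro x y; simpa only [tsAux] using hs x y
  | succ k ih =>
    intro x y
    refine tsAux_succ_le' ((hs x y).trans (add_le_add (supNorm_le_tsAux _ _)
      (supNorm_le_tsAux _ _))) fun n E hn hE => ?_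
    have h1 := Finset.sum_le_sum fun i (_ : i ∈ Finset.univ) => ih (restr (E i) x) (restr (E i) y)
    rw [Finset.sum_add_distrib] at h1
    have h2 := term_le_tsAux_succ (k := k) hn hE x
    have h3 := term_le_tsAux_succ (k := k) hn hE y
    simp_rw [restr_add]
    linarith

lemma tsAux_smul_le (k : ℕ) (c : ℝ) : ∀ x : ℕ →₀ ℝ, tsAux k (c • x) ≤ |c| * tsAux k x := by
  have hs : ∀ x : ℕ →₀ ℝ, supNorm (c • x) ≤ |c| * supNorm x := fun x =>
    supNorm_le fun p => by
      rw [Finsupp.smul_apply, smul_eq_mul, abs_mul]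
      exact mul_le_mul_of_nonneg_left (abs_le_supNorm x p) (abs_nonneg c)
  induction k with
  | zero => intro x; simpa only [tsAux] using hs x
  | succ k ih =>
    intro x
    refine tsAux_succ_le' ((hs x).trans (mul_le_mul_of_nonneg_left (supNorm_le_tsAux _ _)
      (abs_nonneg c))) fun n E hn hE => ?_
    have h1 := Finset.sum_le_sum fun i (_ : i ∈ Finset.univ) => ih (restr (E i) x)
    rw [← Finset.mul_sum] at h1
    have h2 := mul_le_mul_of_nonneg_left (term_le_tsAux_succ (k := k) hn hE x) (abs_nonneg c)
    simp_rw [restr_smul]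
    linarith

lemma tsAux_restr_le (k : ℕ) (F : Finset ℕ) : ∀ x : ℕ →₀ ℝ,
    tsAux k (restr F x) ≤ tsAux k x := by
  have hs : ∀ x : ℕ →₀ ℝ, supNorm (restr F x) ≤ supNorm x := fun x =>
    supNorm_le fun p => by
      rw [restr_apply]; split_ifs
      · exact abs_le_supNorm x p
      · simpa using supNorm_nonneg x
  induction k with
  | zero => intro x; simpa only [tsAux] using hs x
  | succ k ih =>
    intro x
    refine tsAux_succ_le' ((hs x).trans (supNorm_le_tsAux _ _)) fun n E hn hE => ?_
    refine le_trans ?_ (term_le_tsAux_succ hn hE x)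
    have h1 := Finset.sum_le_sum fun i (_ : i ∈ Finset.univ) => ih (restr (E i) x)
    simp_rw [restr_comm _ F]
    linarith

lemma tsAux_le_norm (k : ℕ) (x : ℕ →₀ ℝ) : tsAux k x ≤ tsirelsonNorm x :=
  le_ciSup (f := fun k => tsAux k x)
    ⟨∑ p ∈ x.support, |x p|, by rintro _ ⟨k, rfl⟩; exact tsAux_le_l1 k x⟩ k

lemma tsAux_tendsto (x : ℕ →₀ ℝ) :
    Filter.Tendsto (fun k => tsAux k x) Filter.atTop (nhds (tsirelsonNorm x)) :=
  tendsto_atTop_ciSup (monotone_nat_of_le_succ fun k => tsAux_le_succ k x)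
    ⟨∑ p ∈ x.support, |x p|, by rintro _ ⟨k, rfl⟩; exact tsAux_le_l1 k x⟩

lemma tsNorm_nonneg (x : ℕ →₀ ℝ) : 0 ≤ tsirelsonNorm x :=
  (tsAux_nonneg 0 x).trans (tsAux_le_norm 0 x)

lemma abs_le_tsNorm (x : ℕ →₀ ℝ) (p : ℕ) : |x p| ≤ tsirelsonNorm x :=
  (abs_le_supNorm x p).trans ((supNorm_le_tsAux 0 x).trans (tsAux_le_norm 0 x))

lemma tsNorm_add_le (x y : ℕ →₀ ℝ) :
    tsirelsonNorm (x + y) ≤ tsirelsonNorm x + tsirelsonNorm y :=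
  ciSup_le fun k => (tsAux_add_le k x y).trans (add_le_add (tsAux_le_norm k x) (tsAux_le_norm k y))

lemma tsNorm_restr_le (F : Finset ℕ) (x : ℕ →₀ ℝ) :
    tsirelsonNorm (restr F x) ≤ tsirelsonNorm x :=
  ciSup_le fun k => (tsAux_restr_le k F x).trans (tsAux_le_norm k x)

lemma tsNorm_smul_le (c : ℝ) (x : ℕ →₀ ℝ) :
    tsirelsonNorm (c • x) ≤ |c| * tsirelsonNorm x :=
  ciSup_le fun k => (tsAux_smul_le k c x).trans
    (mul_le_mul_of_nonneg_left (tsAux_le_norm k x) (abs_nonneg c))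

lemma tsNorm_zero : tsirelsonNorm 0 = 0 :=
  le_antisymm (by simpa using tsNorm_smul_le 0 0) (tsNorm_nonneg 0)

lemma tsNorm_smul (c : ℝ) (x : ℕ →₀ ℝ) :
    tsirelsonNorm (c • x) = |c| * tsirelsonNorm x := by
  refine le_antisymm (tsNorm_smul_le c x) ?_
  rcases eq_or_ne c 0 with rfl | hc
  · simp [tsNorm_zero]
  · have h := tsNorm_smul_le c⁻¹ (c • x)
    rw [smul_smul, inv_mul_cancel₀ hc, one_smul, abs_inv] at h
    have hc' : 0 < |c| := abs_pos.mpr hc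
    calc |c| * tsirelsonNorm x ≤ |c| * (|c|⁻¹ * tsirelsonNorm (c • x)) :=
          mul_le_mul_of_nonneg_left h hc'.le
      _ = tsirelsonNorm (c • x) := by field_simp

lemma tsNorm_sum_le {ι : Type*} (s : Finset ι) (x : ι → ℕ →₀ ℝ) :
    tsirelsonNorm (∑ i ∈ s, x i) ≤ ∑ i ∈ s, tsirelsonNorm (x i) := by
  classical
  induction s using Finset.induction_on with
  | empty => simp [tsNorm_zero]
  | insert a s ha ih =>
    rw [Finset.sum_insert ha, Finset.sum_insert ha]
    exact (tsNorm_add_le _ _).trans (by linarith)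

/-- Lower half of the implicit equation for the norm, with the admissible family indexed by a
finite set of naturals: only `card I ≤ E t` is needed. -/
lemma tsNorm_lower (I : Finset ℕ) (E : ℕ → Finset ℕ)
    (hsucc : ∀ s ∈ I, ∀ t ∈ I, s < t → ∀ p ∈ E s, ∀ q ∈ E t, p < q)
    (hmin : ∀ t ∈ I, ∀ p ∈ E t, I.card ≤ p) (x : ℕ →₀ ℝ) :
    (1 / 2) * ∑ t ∈ I, tsirelsonNorm (restr (E t) x) ≤ tsirelsonNorm x := by
  rcases Nat.eq_zero_or_pos I.card with h0 | hpos
  · rw [Finset.card_eq_zero.mp h0]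
    simpa using tsNorm_nonneg x
  set f := I.orderEmbOfFin rfl
  have hf : ∀ i, f i ∈ I := fun i => I.orderEmbOfFin_mem rfl i
  have hadm : Admissible I.card (fun i => E (f i)) :=
    ⟨fun i j hij => hsucc _ (hf i) _ (hf j) (f.strictMono hij), fun i => hmin _ (hf i)⟩
  have hsum : ∑ t ∈ I, tsirelsonNorm (restr (E t) x)
      = ∑ i, tsirelsonNorm (restr (E (f i)) x) := by
    have him : Finset.univ.map f.toEmbedding = I := I.map_orderEmbOfFin_univ rfl
    conv_lhs => rw [← him]
    rw [Finset.sum_map]; rfl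
  rw [hsum]
  refine le_of_tendsto ((tendsto_finsetSum _ fun i _ =>
    tsAux_tendsto (restr (E (f i)) x)).const_mul (1 / 2)) (Filter.Eventually.of_forall fun k => ?_)
  exact (term_le_tsAux_succ hpos hadm x).trans (tsAux_le_norm _ x)

/-- Upper half of the implicit equation for the norm: any number below `‖x‖` is exceeded by a
coordinate or by an averaged sum over an admissible family. -/
lemma tsNorm_upper {x : ℕ →₀ ℝ} {c : ℝ} (h : c < tsirelsonNorm x) :
    (∃ p, c < |x p|) ∨ ∃ (n : ℕ) (E : ℕ → Finset ℕ),
      (∀ s < n, ∀ t < n, s < t → ∀ p ∈ E s, ∀ q ∈ E t, p < q) ∧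
      (∀ t < n, ∀ p ∈ E t, n ≤ p) ∧
      c < (1 / 2) * ∑ t ∈ Finset.range n, tsirelsonNorm (restr (E t) x) := by
  by_contra hcon
  push Not at hcon
  obtain ⟨hsup, hadm⟩ := hcon
  have key : ∀ k, tsAux k x ≤ c := by
    intro k
    cases k with
    | zero => rw [tsAux]; exact supNorm_le hsup
    | succ k =>
      refine tsAux_succ_le (supNorm_le hsup) fun n E hE => ?_
      let E' : ℕ → Finset ℕ := fun t => if ht : t < n then E ⟨t, ht⟩ else ∅
      have hE' : ∀ i : Fin n, E' i = E i := fun i => by simp [E']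
      have := hadm n E' ?_ ?_
      · refine le_trans ?_ this
        rw [Finset.sum_range]
        simp_rw [hE']
        have := Finset.sum_le_sum fun i (_ : i ∈ Finset.univ) =>
          tsAux_le_norm k (restr (E i) x)
        linarith
      · intro s hs t ht hst
        have := hE.1 ⟨s, hs⟩ ⟨t, ht⟩ hst
        rwa [← hE', ← hE'] at this
      · intro t ht
        have := hE.2 ⟨t, ht⟩
        rwa [← hE'] at this
  exact absurd (ciSup_le key : tsirelsonNorm x ≤ c) (not_le.mpr h)

/-! ### Averages of successive vectors -/

/-- `M` successive vectors and `n` successive sets have at most `M + n` incidences, because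
`(t, j) ↦ t + j` is injective on incident pairs. -/
lemma sum_restr_sum_le {M n : ℕ} (ω : Fin M → ℕ →₀ ℝ) (hω : ∀ j, tsirelsonNorm (ω j) = 1)
    (hsuc : ∀ j j' : Fin M, j < j' → ∀ p ∈ (ω j).support, ∀ q ∈ (ω j').support, p < q)
    (E : ℕ → Finset ℕ) (hE : ∀ s < n, ∀ t < n, s < t → ∀ p ∈ E s, ∀ q ∈ E t, p < q) :
    ∑ t ∈ Finset.range n, tsirelsonNorm (restr (E t) (∑ j, ω j)) ≤ (M : ℝ) + n := by
  classical
  have hle : ∀ t j, tsirelsonNorm (restr (E t) (ω j)) ≤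
      if ∃ p ∈ E t, p ∈ (ω j).support then (1 : ℝ) else 0 := by
    intro t j
    split_ifs with h
    · exact (tsNorm_restr_le _ _).trans (hω j).le
    · have : restr (E t) (ω j) = 0 := by
        ext p
        rw [restr_apply]
        split_ifs with hp
        · by_contra hne
          exact h ⟨p, hp, Finsupp.mem_support_iff.mpr hne⟩
        · rfl
      rw [this, tsNorm_zero]
  calc ∑ t ∈ Finset.range n, tsirelsonNorm (restr (E t) (∑ j, ω j))
      ≤ ∑ t ∈ Finset.range n, ∑ j, if ∃ p ∈ E t, p ∈ (ω j).support then (1 : ℝ) else 0 := by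
        refine Finset.sum_le_sum fun t _ => ?_
        rw [restr_sum]
        exact (tsNorm_sum_le _ _).trans (Finset.sum_le_sum fun j _ => hle t j)
    _ = (((Finset.range n ×ˢ (Finset.univ : Finset (Fin M))).filter
          fun x => ∃ p ∈ E x.1, p ∈ (ω x.2).support).card : ℝ) := by
        rw [← Finset.sum_product', Finset.sum_boole]
    _ ≤ ((Finset.range (M + n)).card : ℝ) := by
        refine Nat.cast_le.mpr (Finset.card_le_card_of_injOn (fun x => x.1 + (x.2 : ℕ)) ?_ ?_)
        · rintro ⟨t, j⟩ h
          simp only [Finset.coe_filter, Finset.mem_product, Finset.mem_range, Finset.mem_univ,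
            and_true, Set.mem_ofPred_eq] at h
          simp only [Finset.coe_range, Set.mem_Iio]
          have := j.2
          omega
        · -- a later set can only meet the same or a later vector
          have mono : ∀ t t' : ℕ, ∀ j j' : Fin M, t < n → t' < n → t < t' →
              (∃ p ∈ E t, p ∈ (ω j).support) → (∃ p ∈ E t', p ∈ (ω j').support) → j ≤ j' := by
            rintro t t' j j' ht ht' htt ⟨p, hp, hpj⟩ ⟨q, hq, hqj⟩
            by_contra hlt
            have h1 := hsuc j' j (not_le.mp hlt) q hqj p hpj
            have h2 := hE t ht t' ht' htt p hp q hq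
            omega
          rintro ⟨t, j⟩ h ⟨t', j'⟩ h' heq
          simp only [Finset.coe_filter, Finset.mem_product, Finset.mem_range, Finset.mem_univ,
            and_true, Set.mem_ofPred_eq] at h h'
          simp only at heq
          rcases lt_trichotomy t t' with hlt | rfl | hlt
          · have := Fin.le_def.mp (mono t t' j j' h.1 h'.1 hlt h.2 h'.2)
            omega
          · have : j = j' := Fin.ext (by omega)
            rw [this]
          · have := Fin.le_def.mp (mono t' t j' j h'.1 h.1 hlt h'.2 h.2)
            omega
    _ = (M : ℝ) + n := by simp

lemma average_sum_restr_le {M n : ℕ} (hM : 0 < M) {ε : ℝ} (hε : 0 < ε) (ω : Fin M → ℕ →₀ ℝ)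
    (hω : ∀ j, tsirelsonNorm (ω j) = 1)
    (hsuc : ∀ j j' : Fin M, j < j' → ∀ p ∈ (ω j).support, ∀ q ∈ (ω j').support, p < q)
    (hlow : (1 + ε)⁻¹ * M ≤ tsirelsonNorm (∑ j, ω j))
    (E : ℕ → Finset ℕ) (hE : ∀ s < n, ∀ t < n, s < t → ∀ p ∈ E s, ∀ q ∈ E t, p < q) :
    ∑ t ∈ Finset.range n,
      tsirelsonNorm (restr (E t) ((tsirelsonNorm (∑ j, ω j))⁻¹ • ∑ j, ω j))
      ≤ (1 + ε) * (1 + n / M) := by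
  have hM' : (0 : ℝ) < M := Nat.cast_pos.mpr hM
  have hA : 0 < (1 + ε)⁻¹ * M := by positivity
  have hc : 0 < tsirelsonNorm (∑ j, ω j) := hA.trans_le hlow
  simp_rw [restr_smul, tsNorm_smul, abs_inv, abs_of_pos hc, ← Finset.mul_sum]
  calc _ ≤ (tsirelsonNorm (∑ j, ω j))⁻¹ * ((M : ℝ) + n) :=
        mul_le_mul_of_nonneg_left (sum_restr_sum_le ω hω hsuc E hE) (inv_nonneg.mpr hc.le)
    _ ≤ ((1 + ε)⁻¹ * M)⁻¹ * ((M : ℝ) + n) := by gcongr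
    _ = (1 + ε) * (1 + n / M) := by field_simp

lemma average_coord_le {M : ℕ} (hM : 0 < M) {ε : ℝ} (hε : 0 < ε) (ω : Fin M → ℕ →₀ ℝ)
    (hω : ∀ j, tsirelsonNorm (ω j) = 1)
    (hsuc : ∀ j j' : Fin M, j < j' → ∀ p ∈ (ω j).support, ∀ q ∈ (ω j').support, p < q)
    (hlow : (1 + ε)⁻¹ * M ≤ tsirelsonNorm (∑ j, ω j)) (p : ℕ) :
    |((tsirelsonNorm (∑ j, ω j))⁻¹ • ∑ j, ω j) p| ≤ (1 + ε) / M := by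
  have hM' : (0 : ℝ) < M := Nat.cast_pos.mpr hM
  have hA : 0 < (1 + ε)⁻¹ * M := by positivity
  have hc : 0 < tsirelsonNorm (∑ j, ω j) := hA.trans_le hlow
  -- by disjointness of the supports at most one summand is nonzero at `p`
  have h1 : |(∑ j, ω j) p| ≤ 1 := by
    rw [Finsupp.finsetSum_apply]
    by_cases h : ∃ j, ω j p ≠ 0
    · obtain ⟨j, hj⟩ := h
      rw [Finset.sum_eq_single j]
      · exact (abs_le_tsNorm _ p).trans (hω j).le
      · intro b _ hb
        by_contra hne
        rcases lt_or_gt_of_ne hb with hlt | hlt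
        · exact lt_irrefl _ (hsuc _ _ hlt p (Finsupp.mem_support_iff.mpr hne) p
            (Finsupp.mem_support_iff.mpr hj))
        · exact lt_irrefl _ (hsuc _ _ hlt p (Finsupp.mem_support_iff.mpr hj) p
            (Finsupp.mem_support_iff.mpr hne))
      · simp
    · push Not at h
      simp [h]
  rw [Finsupp.smul_apply, smul_eq_mul, abs_mul, abs_inv, abs_of_pos hc]
  calc _ ≤ (tsirelsonNorm (∑ j, ω j))⁻¹ * 1 :=
        mul_le_mul_of_nonneg_left h1 (inv_nonneg.mpr hc.le)
    _ ≤ ((1 + ε)⁻¹ * M)⁻¹ * 1 := by gcongr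
    _ = (1 + ε) / M := by field_simp

/-! ### Norm estimates for combinations of blocks -/

/-- The vectors `u 0 < u 1 < ⋯` have successive supports. -/
def Successive (u : ℕ → ℕ →₀ ℝ) : Prop :=
  ∀ i j, i < j → ∀ p ∈ (u i).support, ∀ q ∈ (u j).support, p < q

lemma IsBlockSeq.successive {u : ℕ → ℕ →₀ ℝ} (h : IsBlockSeq u) : Successive u := by
  intro i j hij
  induction j, hij using Nat.le_induction with
  | base => exact h.2 i
  | succ j _ ih =>
    intro p hp q hq
    obtain ⟨r, hr⟩ := Finsupp.support_nonempty_iff.mpr (h.1 j)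
    exact (ih p hp r hr).trans (h.2 j r hr q hq)

lemma Successive.disjoint {u : ℕ → ℕ →₀ ℝ} (h : Successive u) {i j p : ℕ} (hij : i ≠ j)
    (hp : p ∈ (u i).support) : u j p = 0 := by
  by_contra hne
  have hq := Finsupp.mem_support_iff.mpr hne
  rcases lt_or_gt_of_ne hij with hlt | hlt
  · exact lt_irrefl _ (h i j hlt p hp p hq)
  · exact lt_irrefl _ (h j i hlt p hq p hp)

lemma Successive.sum_apply {u : ℕ → ℕ →₀ ℝ} (h : Successive u) {i k p : ℕ} (hi : i < k)
    (hp : p ∈ (u i).support) (a : ℕ → ℝ) :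
    (∑ j ∈ Finset.range k, a j • u j) p = a i * u i p := by
  rw [Finsupp.finsetSum_apply, Finset.sum_eq_single i]
  · simp
  · intro j _ hj
    simp [h.disjoint (Ne.symm hj) hp]
  · intro hn; exact absurd (Finset.mem_range.mpr hi) hn

lemma Successive.restr_sum {u : ℕ → ℕ →₀ ℝ} (h : Successive u) {i k : ℕ} (hi : i < k)
    {G : Finset ℕ} (hG : G ⊆ (u i).support) (a : ℕ → ℝ) :
    restr G (∑ j ∈ Finset.range k, a j • u j) = a i • restr G (u i) := by
  ext p
  rw [restr_apply, Finsupp.smul_apply, restr_apply]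
  split_ifs with hp
  · rw [h.sum_apply hi (hG hp), smul_eq_mul]
  · simp

/-- Upper estimate. If `u i` is the first block met by an admissible family of `n` sets, then
`n` is at most some element of the support of `u i`, so all later blocks are hit with norm sum at
most `1 + η` while `u i` itself contributes at most its norm. -/
lemma upper_estimate {u : ℕ → ℕ →₀ ℝ} (hu : Successive u) (hnorm : ∀ i, tsirelsonNorm (u i) = 1)
    {η : ℝ} (hη : 0 ≤ η)
    (hav : ∀ i j, i < j → ∀ (n : ℕ) (E : ℕ → Finset ℕ),
      (∀ s < n, ∀ t < n, s < t → ∀ p ∈ E s, ∀ q ∈ E t, p < q) →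
      (∃ p ∈ (u i).support, n ≤ p) →
      ∑ t ∈ Finset.range n, tsirelsonNorm (restr (E t) (u j)) ≤ 1 + η)
    (k : ℕ) (a : ℕ → ℝ) {R : ℝ} (hR0 : 0 ≤ R)
    (hR : ∀ i < k, |a i| + (1 / 2) * ∑ j ∈ Finset.Ioo i k, |a j| ≤ R) :
    tsirelsonNorm (∑ j ∈ Finset.range k, a j • u j) ≤ R + η * ∑ j ∈ Finset.range k, |a j| := by
  classical
  have hsum0 : 0 ≤ ∑ j ∈ Finset.range k, |a j| := Finset.sum_nonneg fun _ _ => abs_nonneg _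
  have hS : 0 ≤ η * ∑ j ∈ Finset.range k, |a j| := mul_nonneg hη hsum0
  have haR : ∀ i < k, |a i| ≤ R := fun i hi => by
    have : 0 ≤ ∑ j ∈ Finset.Ioo i k, |a j| := Finset.sum_nonneg fun _ _ => abs_nonneg _
    linarith [hR i hi]
  by_contra hcon
  rcases tsNorm_upper (not_le.mp hcon) with ⟨p, hp⟩ | ⟨n, E, hE, hmin, hlt⟩
  · by_cases h : ∃ i < k, p ∈ (u i).support
    · obtain ⟨i, hi, hpi⟩ := h
      rw [hu.sum_apply hi hpi, abs_mul] at hp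
      have h1 : |u i p| ≤ 1 := (abs_le_tsNorm _ p).trans (hnorm i).le
      have h2 := haR i hi
      nlinarith [abs_nonneg (a i), abs_nonneg (u i p)]
    · push Not at h
      have : (∑ j ∈ Finset.range k, a j • u j) p = 0 := by
        rw [Finsupp.finsetSum_apply]
        refine Finset.sum_eq_zero fun j hj => ?_
        rw [Finsupp.smul_apply, Finsupp.notMem_support_iff.mp (h j (Finset.mem_range.mp hj)),
          smul_zero]
      rw [this, abs_zero] at hp
      linarith
  · set T : ℕ → ℝ := fun j => ∑ t ∈ Finset.range n, tsirelsonNorm (restr (E t) (u j)) with hT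
    have hT0 : ∀ j, 0 ≤ T j := fun j => Finset.sum_nonneg fun _ _ => tsNorm_nonneg _
    have hbound : ∑ t ∈ Finset.range n,
        tsirelsonNorm (restr (E t) (∑ j ∈ Finset.range k, a j • u j))
        ≤ ∑ j ∈ Finset.range k, |a j| * T j := by
      simp_rw [hT, Finset.mul_sum]
      rw [Finset.sum_comm]
      refine Finset.sum_le_sum fun t _ => ?_
      rw [_root_.restr_sum]
      refine (tsNorm_sum_le _ _).trans (le_of_eq (Finset.sum_congr rfl fun j _ => ?_))
      rw [restr_smul, tsNorm_smul]
    have hTzero : ∀ j, (¬ ∃ t < n, ∃ p ∈ E t, p ∈ (u j).support) → T j = 0 := by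
      intro j hj
      refine Finset.sum_eq_zero fun t ht => ?_
      have : restr (E t) (u j) = 0 := by
        ext p
        rw [restr_apply]
        split_ifs with hp
        · by_contra hne
          exact hj ⟨t, Finset.mem_range.mp ht, p, hp, Finsupp.mem_support_iff.mpr hne⟩
        · rfl
      rw [this, tsNorm_zero]
    by_cases hex : ∃ i, i < k ∧ ∃ t < n, ∃ p ∈ E t, p ∈ (u i).support
    · -- `i` is the first block met by the family
      set i := Nat.find hex
      obtain ⟨hik, t₀, ht₀, p₀, hp₀, hp₀'⟩ := Nat.find_spec hex
      have hfirst : ∀ j < i, T j = 0 := fun j hj => hTzero j fun hh =>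
        Nat.find_min hex hj ⟨hj.trans hik, hh⟩
      have hTi : (1 / 2) * T i ≤ 1 := by
        have := tsNorm_lower (Finset.range n) E
          (fun s hs t ht => hE s (Finset.mem_range.mp hs) t (Finset.mem_range.mp ht))
          (fun t ht p hp => by simpa using hmin t (Finset.mem_range.mp ht) p hp) (u i)
        rwa [hnorm] at this
      have hTj : ∀ j, i < j → T j ≤ 1 + η := fun j hj =>
        hav i j hj n E hE ⟨p₀, hp₀', hmin t₀ ht₀ p₀ hp₀⟩
      have hsplit : ∑ j ∈ Finset.range k, |a j| * T j
          = |a i| * T i + ∑ j ∈ Finset.Ioo i k, |a j| * T j := by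
        have hins : insert i (Finset.Ioo i k) ⊆ Finset.range k := by
          intro j hj
          simp only [Finset.mem_insert, Finset.mem_Ioo] at hj
          rw [Finset.mem_range]
          rcases hj with rfl | hj
          · exact hik
          · exact hj.2
        rw [← Finset.sum_subset hins, Finset.sum_insert (by simp)]
        intro j hj hj'
        simp only [Finset.mem_insert, Finset.mem_Ioo, Finset.mem_range] at hj hj'
        rw [hfirst j (by omega), mul_zero]
      have hlate : ∑ j ∈ Finset.Ioo i k, |a j| * T j
          ≤ (1 + η) * ∑ j ∈ Finset.Ioo i k, |a j| := by
        rw [Finset.mul_sum]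
        refine Finset.sum_le_sum fun j hj => ?_
        rw [mul_comm]
        exact mul_le_mul_of_nonneg_right (hTj j (Finset.mem_Ioo.mp hj).1) (abs_nonneg _)
      have hIoo : ∑ j ∈ Finset.Ioo i k, |a j| ≤ ∑ j ∈ Finset.range k, |a j| :=
        Finset.sum_le_sum_of_subset_of_nonneg
          (fun j hj => Finset.mem_range.mpr (Finset.mem_Ioo.mp hj).2) fun _ _ _ => abs_nonneg _
      have h1 := hR i hik
      have h2 : η * ∑ j ∈ Finset.Ioo i k, |a j| ≤ η * ∑ j ∈ Finset.range k, |a j| :=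
        mul_le_mul_of_nonneg_left hIoo hη
      have h3 : |a i| * ((1 / 2) * T i) ≤ |a i| * 1 :=
        mul_le_mul_of_nonneg_left hTi (abs_nonneg _)
      nlinarith
    · have : ∑ j ∈ Finset.range k, |a j| * T j = 0 :=
        Finset.sum_eq_zero fun j hj => by
          rw [hTzero j fun hh => hex ⟨j, Finset.mem_range.mp hj, hh⟩, mul_zero]
      linarith

/-- Of `n` nonnegative numbers one can discard `k` (the smallest ones) and keep the fraction
`(n - k) / n` of their sum. -/
lemma exists_discard {n : ℕ} (f : ℕ → ℝ) (k : ℕ) (hk : k ≤ n) :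
    ∃ K ⊆ Finset.range n, K.card = n - k ∧
      ((n : ℝ) - k) * ∑ t ∈ Finset.range n, f t ≤ n * ∑ t ∈ K, f t := by
  induction k with
  | zero => exact ⟨Finset.range n, subset_rfl, by simp, by simp⟩
  | succ k ih =>
    obtain ⟨K, hK, hcard, hsum⟩ := ih (by omega)
    have hne : K.Nonempty := Finset.card_pos.mp (by omega)
    obtain ⟨t, ht, hmin⟩ := Finset.exists_min_image K f hne
    refine ⟨K.erase t, (Finset.erase_subset _ _).trans hK, ?_, ?_⟩
    · rw [Finset.card_erase_of_mem ht]; omega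
    · have h1 := Finset.card_nsmul_le_sum K f (f t) hmin
      have h2 := Finset.add_sum_erase K f ht
      have hc : (K.card : ℝ) = (n : ℝ) - k := by rw [hcard, Nat.cast_sub (by omega)]
      rw [nsmul_eq_mul, hc] at h1
      have hkn : (k : ℝ) + 1 ≤ n := by exact_mod_cast hk
      push_cast
      rw [← h2] at hsum h1
      set A := ∑ x ∈ K.erase t, f x
      set B := ∑ t ∈ Finset.range n, f t
      have hpos : (0 : ℝ) < n - k := by linarith
      have h3 : ((n : ℝ) - k - 1) * (f t + A) ≤ (n - k) * A := by nlinarith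
      have h4 : ((n : ℝ) - k - 1) * ((n - k) * B) ≤ (n - k - 1) * (n * (f t + A)) :=
        mul_le_mul_of_nonneg_left hsum (by linarith)
      have h5 : ((n : ℝ) - k) * ((n - (k + 1)) * B) ≤ (n - k) * (n * A) := by
        nlinarith [mul_le_mul_of_nonneg_left h3 (Nat.cast_nonneg (α := ℝ) n)]
      exact le_of_mul_le_mul_left h5 hpos

/-- Lower estimate. An admissible family that almost norms the average `u i` must have many
members; discarding the `k` least important of them makes room for the supports of the later
blocks, each of which then counts with weight `1 / 2`. -/
lemma lower_estimate {u : ℕ → ℕ →₀ ℝ} (hu : Successive u) (hnorm : ∀ i, tsirelsonNorm (u i) = 1)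
    {η M : ℝ} (hη : 0 < η) (hη4 : η ≤ 1 / 4) (hM : 0 < M) {i k : ℕ} (hi : i < k)
    (hMk : 5 * k / η ≤ M) (hsup : ∀ p, |u i p| ≤ 1 / 2)
    (hav : ∀ (n : ℕ) (E : ℕ → Finset ℕ),
      (∀ s < n, ∀ t < n, s < t → ∀ p ∈ E s, ∀ q ∈ E t, p < q) →
      ∑ t ∈ Finset.range n, tsirelsonNorm (restr (E t) (u i)) ≤ 5 / 4 * (1 + n / M))
    (a : ℕ → ℝ) :
    (1 - 2 * η) * |a i| + (1 / 2) * ∑ j ∈ Finset.Ioo i k, |a j|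
      ≤ tsirelsonNorm (∑ j ∈ Finset.range k, a j • u j) := by
  classical
  rcases tsNorm_upper (x := u i) (c := 1 - η) (by rw [hnorm]; linarith) with
    ⟨p, hp⟩ | ⟨n, E, hE, hmin, hlt⟩
  · linarith [hsup p]
  have hk0 : (0 : ℝ) < k := by exact_mod_cast (by omega : 0 < k)
  -- the family has more than `M / 5` members, hence at least `k / η`
  have hkn : (k : ℝ) ≤ η * n := by
    have h1 := hav n E hE
    have h2 : 1 / 5 ≤ (n : ℝ) / M := by linarith
    rw [le_div_iff₀ hM] at h2
    rw [div_le_iff₀ hη] at hMk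
    nlinarith
  have hn0 : (0 : ℝ) < n := by
    by_contra h
    nlinarith
  have hkle : k ≤ n := by
    have : (k : ℝ) ≤ n := by nlinarith
    exact_mod_cast this
  obtain ⟨K, hK, hcard, hKsum⟩ :=
    exists_discard (n := n) (fun t => tsirelsonNorm (restr (E t) (u i))) k hkle
  -- some member of the family meets `u i`, so `n` lies below all later blocks
  have hpt : ∃ p ∈ (u i).support, n ≤ p := by
    by_contra hcon
    push Not at hcon
    have : ∑ t ∈ Finset.range n, tsirelsonNorm (restr (E t) (u i)) = 0 := by
      refine Finset.sum_eq_zero fun t ht => ?_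
      have : restr (E t) (u i) = 0 := by
        ext p
        rw [restr_apply]
        split_ifs with hp
        · by_contra hne
          have h1 := hcon p (Finsupp.mem_support_iff.mpr hne)
          have h2 := hmin t (Finset.mem_range.mp ht) p hp
          omega
        · rfl
      rw [this, tsNorm_zero]
    rw [this] at hlt
    linarith
  obtain ⟨p₀, hp₀, hnp₀⟩ := hpt
  let G : ℕ → Finset ℕ := fun t => if t < n then E t ∩ (u i).support else (u (t - n)).support
  let J : Finset ℕ := (Finset.Ioo i k).map (addLeftEmbedding n)
  have hKlt : ∀ t ∈ K, t < n := fun t ht => Finset.mem_range.mp (hK ht)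
  have hJ : ∀ t ∈ J, ∃ j, i < j ∧ j < k ∧ t = n + j := by
    intro t ht
    obtain ⟨j, hj, rfl⟩ := Finset.mem_map.mp ht
    exact ⟨j, (Finset.mem_Ioo.mp hj).1, (Finset.mem_Ioo.mp hj).2, rfl⟩
  have hdisj : Disjoint K J := by
    rw [Finset.disjoint_left]
    intro t ht ht'
    obtain ⟨j, _, _, rfl⟩ := hJ t ht'
    have := hKlt _ ht
    omega
  have hGK : ∀ t < n, G t = E t ∩ (u i).support := fun t ht => by simp [G, ht]
  have hGJ : ∀ j, G (n + j) = (u j).support := fun j => by simp [G]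
  have hcardI : (K ∪ J).card ≤ n := by
    rw [Finset.card_union_of_disjoint hdisj, hcard, Finset.card_map, Nat.card_Ioo]
    omega
  have key := tsNorm_lower (K ∪ J) G ?_ ?_ (∑ j ∈ Finset.range k, a j • u j)
  · rw [Finset.sum_union hdisj] at key
    have e1 : ∑ t ∈ K, tsirelsonNorm (restr (G t) (∑ j ∈ Finset.range k, a j • u j))
        = |a i| * ∑ t ∈ K, tsirelsonNorm (restr (E t) (u i)) := by
      rw [Finset.mul_sum]
      refine Finset.sum_congr rfl fun t ht => ?_
      rw [hGK t (hKlt t ht), hu.restr_sum hi Finset.inter_subset_right, tsNorm_smul]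
      congr 2
      ext p
      simp only [restr_apply, Finset.mem_inter, Finsupp.mem_support_iff]
      by_cases h : u i p = 0 <;> simp [h]
    have e2 : ∑ t ∈ J, tsirelsonNorm (restr (G t) (∑ j ∈ Finset.range k, a j • u j))
        = ∑ j ∈ Finset.Ioo i k, |a j| := by
      rw [Finset.sum_map]
      refine Finset.sum_congr rfl fun j hj => ?_
      rw [addLeftEmbedding_apply, hGJ, hu.restr_sum (Finset.mem_Ioo.mp hj).2 subset_rfl,
        tsNorm_smul]
      have : restr (u j).support (u j) = u j := by
        ext p
        rw [restr_apply]
        split_ifs with h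
        · rfl
        · exact (Finsupp.notMem_support_iff.mp h).symm
      rw [this, hnorm, mul_one]
    rw [e1, e2] at key
    have h1 : 1 - 2 * η ≤ (1 / 2) * ∑ t ∈ K, tsirelsonNorm (restr (E t) (u i)) := by
      set A := ∑ t ∈ K, tsirelsonNorm (restr (E t) (u i))
      set B := ∑ t ∈ Finset.range n, tsirelsonNorm (restr (E t) (u i))
      have hB : 0 ≤ B := Finset.sum_nonneg fun _ _ => tsNorm_nonneg _
      have h2 : (n : ℝ) * ((1 - η) * B) ≤ n * A := by nlinarith
      have h3 := le_of_mul_le_mul_left h2 hn0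
      nlinarith
    have h2 := mul_le_mul_of_nonneg_right h1 (abs_nonneg (a i))
    linarith
  · intro s hs t ht hst p hp q hq
    rcases Finset.mem_union.mp hs with hs | hs <;> rcases Finset.mem_union.mp ht with ht | ht
    · rw [hGK s (hKlt s hs), Finset.mem_inter] at hp
      rw [hGK t (hKlt t ht), Finset.mem_inter] at hq
      exact hE s (hKlt s hs) t (hKlt t ht) hst p hp.1 q hq.1
    · obtain ⟨j, hij, _, rfl⟩ := hJ t ht
      rw [hGK s (hKlt s hs), Finset.mem_inter] at hp
      rw [hGJ] at hq
      exact hu i j hij p hp.2 q hq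
    · obtain ⟨j, _, _, rfl⟩ := hJ s hs
      have := hKlt t ht
      omega
    · obtain ⟨j, _, _, rfl⟩ := hJ s hs
      obtain ⟨j', _, _, rfl⟩ := hJ t ht
      rw [hGJ] at hp hq
      exact hu j j' (by omega) p hp q hq
  · intro t ht p hp
    refine hcardI.trans ?_
    rcases Finset.mem_union.mp ht with ht | ht
    · rw [hGK t (hKlt t ht), Finset.mem_inter] at hp
      exact hmin t (hKlt t ht) p hp.1
    · obtain ⟨j, hij, _, rfl⟩ := hJ t ht
      rw [hGJ] at hp
      exact hnp₀.trans (hu i j hij p₀ hp₀ p hp).le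

/-! ### Passing to the spreading model -/

lemma sum_pad_smul {V : Type*} [AddCommGroup V] [Module ℝ V] {k n : ℕ} (hkn : k ≤ n) (A : ℝ)
    (a : ℕ → ℝ) (v : ℕ → V) :
    ∑ i : Fin n, (if (i : ℕ) < k then A⁻¹ * a i else 0) • v i
      = A⁻¹ • ∑ j ∈ Finset.range k, a j • v j := by
  rw [Fin.sum_univ_eq_sum_range (fun i => (if i < k then A⁻¹ * a i else 0) • v i) n,
    ← Finset.sum_subset (Finset.range_subset_range.mpr hkn), Finset.smul_sum]
  · refine Finset.sum_congr rfl fun j hj => ?_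
    simp [Finset.mem_range.mp hj, smul_smul]
  · intro j _ hj
    simp [Finset.mem_range.not.mp hj]

/-- The spreading model norm of a fixed combination is approximated arbitrarily well along all
sufficiently late subsequences: pad the coefficients with zeros and rescale them into
`[-1, 1]`. -/
lemma spreading_approx {S : Type*} [NormedAddCommGroup S] [NormedSpace ℝ S]
    {e : ℕ → ℕ →₀ ℝ} {s : ℕ → S} (hs : IsSpreadingModelWith tsirelsonNorm e s)
    (k : ℕ) (a : ℕ → ℝ) {δ : ℝ} (hδ : 0 < δ) :
    ∃ L, ∀ κ : ℕ → ℕ, StrictMono κ → L ≤ κ 0 →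
      |tsirelsonNorm (∑ j ∈ Finset.range k, a j • e (κ j))
        - ‖∑ j ∈ Finset.range k, a j • s j‖| < δ := by
  obtain ⟨-, ε, -, -, hlim, hmain⟩ := hs
  have hA0 : 0 ≤ ∑ j ∈ Finset.range k, |a j| := Finset.sum_nonneg fun _ _ => abs_nonneg _
  set A := 1 + ∑ j ∈ Finset.range k, |a j| with hA
  have hApos : 0 < A := by linarith
  obtain ⟨n₀, hn₀⟩ := Filter.eventually_atTop.mp
    (hlim.eventually (gt_mem_nhds (div_pos hδ hApos)))
  refine ⟨max n₀ k, fun κ hκ hL => ?_⟩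
  set n := max n₀ k
  have hkn : k ≤ n := le_max_right _ _
  let b : ℕ → ℝ := fun j => if j < k then A⁻¹ * a j else 0
  have hb : ∀ j, |b j| ≤ 1 := by
    intro j
    simp only [b]
    split_ifs with hj
    · have : |a j| ≤ ∑ j ∈ Finset.range k, |a j| :=
        Finset.single_le_sum (f := fun j => |a j|) (fun _ _ => abs_nonneg _)
          (Finset.mem_range.mpr hj)
      rw [abs_mul, abs_inv, abs_of_pos hApos, inv_mul_le_iff₀ hApos]
      linarith
    · simp
  have h := hmain n (fun i => b i) (fun i => hb i) (fun i => κ i) (fun i j hij => hκ hij)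
    (fun i => hL.trans (hκ.monotone (Nat.zero_le _)))
  rw [sum_pad_smul hkn A a (fun j => e (κ j)), sum_pad_smul hkn A a s, tsNorm_smul, norm_smul, Real.norm_eq_abs, ← mul_sub,
    abs_mul, abs_abs, abs_inv, abs_of_pos hApos, inv_mul_lt_iff₀ hApos] at h
  have h2 := hn₀ n (le_max_left _ _)
  rw [lt_div_iff₀ hApos] at h2
  linarith

/-- There is a strictly increasing sequence starting at `L` and growing at least as fast as a
prescribed function. -/
lemma exists_fast_seq (L : ℕ) (g : ℕ → ℕ) :
    ∃ κ : ℕ → ℕ, StrictMono κ ∧ κ 0 = L ∧ ∀ j, g (κ j) ≤ κ (j + 1) := by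
  let κ : ℕ → ℕ := fun n => Nat.rec L (fun _ r => max (r + 1) (g r)) n
  have hsucc : ∀ j, κ (j + 1) = max (κ j + 1) (g (κ j)) := fun _ => rfl
  refine ⟨κ, strictMono_nat_of_lt_succ fun j => ?_, rfl, fun j => ?_⟩
  · rw [hsucc]; exact lt_of_lt_of_le (Nat.lt_succ_self _) (le_max_left _ _)
  · rw [hsucc]; exact le_max_right _ _

/-- Let `(e_i)` be a normalized block basis of the unit vector basis of Tsirelson's
space such that each `e_i` is a `(1+ε_i)`-`ℓ₁^{m_i}` average, where `m_i ↑ ∞` and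
`ε_i ↓ 0`.  If `(s_i)` is a spreading model of `(e_i)` then for all scalars
`a_1, …, a_k`:  `‖∑ a_i s_i‖ = max_i (|a_i| + (1/2) ∑_{j>i} |a_j|)`. -/
theorem stmt11
    (m : ℕ → ℕ) (hm : StrictMono m) (hmpos : ∀ i, 0 < m i)
    (ε : ℕ → ℝ) (hε : ∀ i, 0 < ε i) (hεanti : Antitone ε)
    (hεlim : Filter.Tendsto ε Filter.atTop (nhds 0))
    (e : ℕ → (ℕ →₀ ℝ)) (hblock : IsBlockSeq e)
    (hnorm : ∀ i, tsirelsonNorm (e i) = 1)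
    (havg : ∀ i, ∃ ω : Fin (m i) → (ℕ →₀ ℝ),
      (∀ j, tsirelsonNorm (ω j) = 1) ∧
      (∀ j j' : Fin (m i), j < j' → ∀ p ∈ (ω j).support, ∀ q ∈ (ω j').support, p < q) ∧
      (∀ j, (ω j).support ⊆ (e i).support) ∧
      (∀ b : Fin (m i) → ℝ,
        (1 + ε i)⁻¹ * ∑ j, |b j| ≤ tsirelsonNorm (∑ j, b j • ω j) ∧
        tsirelsonNorm (∑ j, b j • ω j) ≤ ∑ j, |b j|) ∧
      e i = (tsirelsonNorm (∑ j, ω j))⁻¹ • ∑ j, ω j)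
    (S : Type*) [NormedAddCommGroup S] [NormedSpace ℝ S] [CompleteSpace S]
    (s : ℕ → S) (hs : IsSpreadingModelWith tsirelsonNorm e s) :
    ∀ (k : ℕ) (a : Fin k → ℝ),
      ‖∑ i, a i • s i‖ =
        ⨆ i : Fin k, (|a i| + (1 / 2) * ∑ j ∈ Finset.univ.filter (fun j => i < j), |a j|) := by
  have hsuc := hblock.successive
  -- the two consequences of being an average that the argument uses
  have hlow : ∀ i, ∀ ω : Fin (m i) → (ℕ →₀ ℝ),
      (∀ b : Fin (m i) → ℝ, (1 + ε i)⁻¹ * ∑ j, |b j| ≤ tsirelsonNorm (∑ j, b j • ω j) ∧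
        tsirelsonNorm (∑ j, b j • ω j) ≤ ∑ j, |b j|) →
      (1 + ε i)⁻¹ * (m i) ≤ tsirelsonNorm (∑ j, ω j) := by
    intro i ω h
    simpa using (h fun _ => 1).1
  have hav : ∀ (i n : ℕ) (E : ℕ → Finset ℕ),
      (∀ s < n, ∀ t < n, s < t → ∀ p ∈ E s, ∀ q ∈ E t, p < q) →
      ∑ t ∈ Finset.range n, tsirelsonNorm (restr (E t) (e i)) ≤ (1 + ε i) * (1 + n / m i) := by
    intro i n E hE
    obtain ⟨ω, hω, hωs, -, hb, he⟩ := havg i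
    rw [he]
    exact average_sum_restr_le (hmpos i) (hε i) ω hω hωs (hlow i ω hb) E hE
  have hcoord : ∀ i p, |e i p| ≤ (1 + ε i) / m i := by
    intro i p
    obtain ⟨ω, hω, hωs, -, hb, he⟩ := havg i
    rw [he]
    exact average_coord_le (hmpos i) (hε i) ω hω hωs (hlow i ω hb) p
  intro k a'
  let a : ℕ → ℝ := fun j => if h : j < k then a' ⟨j, h⟩ else 0
  have ha : ∀ i : Fin k, a' i = a i := fun i => by simp [a]
  have hlhs : ∑ i, a' i • s i = ∑ j ∈ Finset.range k, a j • s j := by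
    rw [Finset.sum_range]
    exact Finset.sum_congr rfl fun i _ => by rw [ha]
  have hterm : ∀ i : Fin k, |a' i| + (1 / 2) * ∑ j ∈ Finset.univ.filter (fun j => i < j), |a' j|
      = |a i| + (1 / 2) * ∑ j ∈ Finset.Ioo (i : ℕ) k, |a j| := by
    intro i
    rw [ha]
    congr 2
    rw [Finset.sum_filter]
    have h1 : ∀ j : Fin k, (if i < j then |a' j| else 0)
        = (fun j : ℕ => if (i : ℕ) < j then |a j| else 0) j := by
      intro j
      simp only [ha, Fin.lt_def]
    simp_rw [h1]
    rw [Fin.sum_univ_eq_sum_range (fun j : ℕ => if (i : ℕ) < j then |a j| else 0) k,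
      ← Finset.sum_filter]
    congr 1
    ext j
    simp [and_comm]
  rw [hlhs]
  simp_rw [hterm]
  set X := ‖∑ j ∈ Finset.range k, a j • s j‖
  set R := ⨆ i : Fin k, (|a i| + (1 / 2) * ∑ j ∈ Finset.Ioo (i : ℕ) k, |a j|) with hRdef
  have hR0 : 0 ≤ R := Real.iSup_nonneg fun i =>
    add_nonneg (abs_nonneg _) (mul_nonneg (by norm_num) (Finset.sum_nonneg fun _ _ => abs_nonneg _))
  have hR : ∀ i < k, |a i| + (1 / 2) * ∑ j ∈ Finset.Ioo i k, |a j| ≤ R := fun i hi =>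
    le_ciSup (f := fun i : Fin k => |a i| + (1 / 2) * ∑ j ∈ Finset.Ioo (i : ℕ) k, |a j|)
      (Set.finite_range _).bddAbove ⟨i, hi⟩
  set A := ∑ j ∈ Finset.range k, |a j|
  have hA0 : 0 ≤ A := Finset.sum_nonneg fun _ _ => abs_nonneg _
  have haA : ∀ i < k, |a i| ≤ A := fun i hi =>
    Finset.single_le_sum (f := fun j => |a j|) (fun _ _ => abs_nonneg _) (Finset.mem_range.mpr hi)
  have main : ∀ η : ℝ, 0 < η → η ≤ 1 / 4 →
      X ≤ R + η * (3 * A + 1) ∧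
      ∀ i < k, |a i| + (1 / 2) * ∑ j ∈ Finset.Ioo i k, |a j| ≤ X + η * (3 * A + 1) := by
    intro η hη hη4
    obtain ⟨L, hL⟩ := spreading_approx hs k a hη
    obtain ⟨L₁, hL₁⟩ := Filter.eventually_atTop.mp (hεlim.eventually (gt_mem_nhds hη))
    obtain ⟨L₂, hL₂⟩ := exists_nat_ge (5 * k / η)
    -- the next block is so late that its length dwarfs the support of the current one
    obtain ⟨κ, hκ, hκ0, hκg⟩ := exists_fast_seq (max (max L L₁) (max L₂ 4))
      fun r => ⌈((e r).support.sup id : ℕ) / η⌉₊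
    have hκge : ∀ j, max (max L L₁) (max L₂ 4) ≤ κ j := fun j => by
      rw [← hκ0]; exact hκ.monotone (Nat.zero_le _)
    have hκm : ∀ j, κ j ≤ m (κ j) := fun j => hm.le_apply
    have hmR : ∀ j, (0 : ℝ) < m (κ j) := fun j => Nat.cast_pos.mpr (hmpos _)
    have hεη : ∀ j, ε (κ j) ≤ η := fun j =>
      (hL₁ _ (((le_max_right _ _).trans (le_max_left _ _)).trans (hκge j))).le
    have happ := abs_lt.mp (hL κ hκ (((le_max_left _ _).trans (le_max_left _ _)).trans (hκge 0)))
    have hsuc' : Successive fun j => e (κ j) := fun i j hij => hsuc _ _ (hκ hij)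
    constructor
    · have hup := upper_estimate hsuc' (fun j => hnorm (κ j)) (η := 3 * η) (by linarith) ?_ k a
        hR0 hR
      · nlinarith [happ.1]
      · intro i j hij n E hE hp
        obtain ⟨p, hp, hnp⟩ := hp
        refine (hav (κ j) n E hE).trans ?_
        have h1 : (n : ℝ) / m (κ j) ≤ η := by
          have h2 : p ≤ (e (κ i)).support.sup id := Finset.le_sup (f := id) hp
          have h3 : ((e (κ i)).support.sup id : ℕ) / η ≤ (κ (i + 1) : ℝ) :=
            (Nat.le_ceil _).trans (Nat.cast_le.mpr (hκg i))
          have h4 : κ (i + 1) ≤ m (κ j) := (hκ.monotone hij).trans (hκm j)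
          have h5 : (κ (i + 1) : ℝ) ≤ m (κ j) := Nat.cast_le.mpr h4
          have h6 : (n : ℝ) ≤ ((e (κ i)).support.sup id : ℕ) := Nat.cast_le.mpr (hnp.trans h2)
          rw [div_le_iff₀ hη] at h3
          rw [div_le_iff₀ (hmR j)]
          nlinarith
        have h0 : 0 ≤ (n : ℝ) / m (κ j) := by positivity
        have h7 := hεη j
        have h8 := hε (κ j)
        nlinarith
    · intro i hi
      have h4 : (4 : ℝ) ≤ m (κ i) := by
        have : 4 ≤ m (κ i) :=
          ((le_max_right _ _).trans (le_max_right _ _)).trans ((hκge i).trans (hκm i))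
        exact_mod_cast this
      have hlo := lower_estimate hsuc' (fun j => hnorm (κ j)) hη hη4 (hmR i) hi ?_ ?_ ?_ a
      · have := mul_le_mul_of_nonneg_left (haA i hi) hη.le
        nlinarith [happ.2, mul_nonneg hη.le hA0]
      · refine hL₂.trans (Nat.cast_le.mpr ?_)
        exact ((le_max_left _ _).trans (le_max_right _ _)).trans ((hκge i).trans (hκm i))
      · intro p
        refine (hcoord (κ i) p).trans ?_
        rw [div_le_iff₀ (hmR i)]
        linarith [hεη i]
      · intro n E hE
        refine (hav (κ i) n E hE).trans ?_
        have : 0 ≤ (n : ℝ) / m (κ i) := by positivity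
        nlinarith [hεη i]
  -- let the error tend to zero
  have choose_η : ∀ δ : ℝ, 0 < δ → ∃ η : ℝ, 0 < η ∧ η ≤ 1 / 4 ∧ η * (3 * A + 1) ≤ δ := by
    intro δ hδ
    have hpos : 0 < 3 * A + 1 := by linarith
    refine ⟨min (1 / 4) (δ / (3 * A + 1)), lt_min (by norm_num) (div_pos hδ hpos),
      min_le_left _ _, ?_⟩
    rw [← le_div_iff₀ hpos]
    exact min_le_right _ _
  apply le_antisymm
  · refine le_of_forall_pos_le_add fun δ hδ => ?_
    obtain ⟨η, h1, h2, h3⟩ := choose_η δ hδ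
    exact (main η h1 h2).1.trans (by linarith)
  · refine Real.iSup_le (fun i => le_of_forall_pos_le_add fun δ hδ => ?_) (norm_nonneg _)
    obtain ⟨η, h1, h2, h3⟩ := choose_η δ hδ
    exact ((main η h1 h2).2 i i.2).trans (by linarith)
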